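/- Let φ : ℂ → ℂ be a smooth (C^∞) function with compact support, and let k ≥ 1 be an integer. Define the Wirtinger operator ∂ by (∂ψ)(w) = (1/2)·(Dψ(w)(1) − i·Dψ(w)(i)), where Dψ(w) is the real Fréchet derivative of ψ at w, and let ∂^{k−1}φ denote its (k−1)-fold iterate applied to φ. Then there exist δ > 0 and a function g : ℂ → ℂ holomorphic on {λ ∈ ℂ : Re λ > −δ} such that for every λ ∈ ℂ with Re λ > k/2, the function z ↦ ‖z‖^{2λ} · z^{−k} · \bar{z}^{−1} · φ(z) is integrable on ℂ and g(λ) = λ · ∫_ℂ ‖z‖^{2λ} · z^{−k} · \bar{z}^{−1} · φ(z) dA(z); moreover g(0) = (π/(k−1)!) · (∂^{k−1}φ)(0). -/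

import Mathlib

/-- The Wirtinger operator `∂ψ(w) = (1/2)(Dψ(w)(1) - i·Dψ(w)(i))`, where
`Dψ(w)` is the real Fréchet derivative of `ψ` at `w`. -/
noncomputable def wirtingerDeriv (ψ : ℂ → ℂ) (w : ℂ) : ℂ :=
  (1 / 2 : ℂ) * (fderiv ℝ ψ w 1 - Complex.I * fderiv ℝ ψ w Complex.I)

/-!
In polar coordinates the integral of `|z|^{2λ} z^{-m-1} \bar z^{-1} φ` over `ℂ` is `2π` times the
Mellin transform at `2λ` of the circle average `A(r)` of `z^{-m} φ`. On the circle `|z| = r` the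
monomial `z^{-m}` is orthogonal to every monomial `z^a \bar z^b` with `a + b ≤ m` except `z^m`, so
Taylor's formula at `0` gives `A(r) = ∂^m φ(0) / m! + O(r)`. The Mellin transform of such a function
has at worst a simple pole at `0`, and multiplication by `λ` turns its residue into the value
at `0`.
-/

open Asymptotics Filter MeasureTheory Set Topology

section Mellin

variable {E : Type*} [NormedAddCommGroup E] [NormedSpace ℂ E]

theorem hasMellin_const_Ioc [CompleteSpace E] (c : E) {s : ℂ} (hs : 0 < s.re) :
    HasMellin (indicator (Ioc 0 1) fun _ : ℝ => c) s ((1 / s) • c) := by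
  obtain ⟨hconv, heq⟩ := hasMellin_one_Ioc hs
  have hsmul : ∀ t : ℝ, (t : ℂ) ^ (s - 1) • indicator (Ioc 0 1) (fun _ : ℝ => c) t =
      ((t : ℂ) ^ (s - 1) • indicator (Ioc 0 1) (fun _ : ℝ => (1 : ℂ)) t) • c := fun t => by
    by_cases ht : t ∈ Ioc (0 : ℝ) 1 <;> simp [ht]
  refine ⟨?_, ?_⟩
  · simp only [MellinConvergent, hsmul]
    exact hconv.smul_const c
  · simp only [mellin, hsmul, integral_smul_const]
    rw [← heq, mellin]

theorem exists_differentiableOn_eq_smul_mellin [CompleteSpace E] {f : ℝ → E} {c : E} {a b : ℝ}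
    (ha : 0 < a) (hb : 0 < b) (hf : LocallyIntegrableOn f (Ioi 0))
    (hf_top : f =O[atTop] fun t => Real.exp (-a * t))
    (hf_bot : (fun t => f t - c) =O[𝓝[>] 0] (· ^ b)) :
    ∃ g : ℂ → E, DifferentiableOn ℂ g {s | -b < s.re} ∧
      (∀ s : ℂ, 0 < s.re → g s = s • mellin f s) ∧ g 0 = c := by
  -- Removing `c` on `(0, 1]` splits off the pole `c / s` and improves the behaviour at `0`.
  set χ : ℝ → E := indicator (Ioc 0 1) fun _ => c with hχ
  have hχ_int : LocallyIntegrableOn χ (Ioi 0) :=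
    ((locallyIntegrable_const c).indicator measurableSet_Ioc).locallyIntegrableOn _
  have hdiff : LocallyIntegrableOn (f - χ) (Ioi 0) := hf.sub hχ_int
  have hdiff_top : (f - χ) =O[atTop] fun t => Real.exp (-a * t) := by
    refine hf_top.congr' ?_ EventuallyEq.rfl
    filter_upwards [eventually_gt_atTop 1] with t ht
    simp [hχ, ht.not_ge]
  have hdiff_bot : (f - χ) =O[𝓝[>] 0] (· ^ (-(-b))) := by
    simp only [neg_neg]
    refine hf_bot.congr' ?_ EventuallyEq.rfl
    filter_upwards [Ioc_mem_nhdsGT one_pos] with t ht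
    simp [hχ, ht]
  refine ⟨fun s => c + s • mellin (f - χ) s, fun s hs => ?_, fun s hs => ?_, by simp⟩
  · exact ((differentiableAt_id.smul (mellin_differentiableAt_of_isBigO_rpow_exp ha hdiff
      hdiff_top hdiff_bot hs)).const_add c).differentiableWithinAt
  · have hs0 : s ≠ 0 := fun h => by simp [h] at hs
    have hconv : MellinConvergent (f - χ) s :=
      mellinConvergent_of_isBigO_rpow_exp ha hdiff hdiff_top hdiff_bot (by linarith)
    have hmellin := (hasMellin_add hconv (hasMellin_const_Ioc c hs).1).2
    rw [(hasMellin_const_Ioc c hs).2] at hmellin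
    have hfχ : (fun t => (f - χ) t + indicator (Ioc 0 1) (fun _ : ℝ => c) t) = f := by
      ext t; simp [hχ]
    rw [hfχ] at hmellin
    rw [hmellin, smul_add, smul_smul, mul_one_div_cancel hs0, one_smul, add_comm]

end Mellin

section Polar

variable {E : Type*} [NormedAddCommGroup E] [NormedSpace ℝ E]

theorem integrableOn_polarCoord_symm {f : ℂ → E} (hf : Integrable f) :
    IntegrableOn (fun p : ℝ × ℝ => p.1 • f (Complex.polarCoord.symm p)) polarCoord.target := by
  have hf_prod : Integrable fun q : ℝ × ℝ => f (Complex.measurableEquivRealProd.symm q) :=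
    (Complex.volume_preserving_equiv_real_prod.symm _).integrable_comp_of_integrable hf
  have hf_image : IntegrableOn (fun q : ℝ × ℝ => f (Complex.measurableEquivRealProd.symm q))
      (polarCoord.symm '' polarCoord.target) := hf_prod.integrableOn
  rw [integrableOn_image_iff_integrableOn_abs_det_fderiv_smul volume
    polarCoord.open_target.measurableSet
    (fun p _ => (hasFDerivAt_polarCoord_symm p).hasFDerivWithinAt)
    polarCoord.symm.injOn] at hf_image
  refine hf_image.congr_fun (fun p hp => ?_) polarCoord.open_target.measurableSet
  simp only [det_fderivPolarCoordSymm, abs_of_pos (show 0 < p.1 from hp.1),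
    Complex.measurableEquivRealProd_symm_polarCoord_symm_apply]

theorem circleAverage_zero_eq_setIntegral_Ioo (f : ℂ → E) (r : ℝ) :
    Real.circleAverage f 0 r =
      (2 * Real.pi)⁻¹ • ∫ θ in Ioo (-Real.pi) Real.pi, f (Complex.polarCoord.symm (r, θ)) := by
  rw [Real.circleAverage_eq_integral_add (-Real.pi),
    intervalIntegral.integral_comp_add_right (fun θ => f (circleMap 0 r θ)),
    intervalIntegral.integral_of_le (by linarith [Real.pi_pos]), integral_Ioc_eq_integral_Ioo]
  simp only [zero_add, show 2 * Real.pi + -Real.pi = Real.pi by ring, circleMap,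
    Complex.exp_mul_I, Complex.polarCoord_symm_apply, Complex.ofReal_cos, Complex.ofReal_sin]

theorem integral_eq_integral_smul_circleAverage {f : ℂ → E} (hf : Integrable f) :
    ∫ z, f z = (2 * Real.pi) • ∫ r in Ioi (0 : ℝ), r • Real.circleAverage f 0 r := by
  have hfubini := integrableOn_polarCoord_symm hf
  rw [polarCoord_target] at hfubini
  rw [← Complex.integral_comp_polarCoord_symm, polarCoord_target, Measure.volume_eq_prod,
    setIntegral_prod _ hfubini, ← integral_smul]
  refine setIntegral_congr_fun measurableSet_Ioi fun r _ => ?_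
  simp only [circleAverage_zero_eq_setIntegral_Ioo, integral_smul]
  rw [smul_comm r, smul_inv_smul₀ Real.two_pi_pos.ne']

end Polar

section Taylor

variable {E F : Type*} [NormedAddCommGroup E] [NormedSpace ℝ E] [NormedAddCommGroup F]
  [NormedSpace ℝ F]

theorem continuous_iteratedFDeriv_apply_diag (n : ℕ) (f : E → F) (x : E) :
    Continuous fun y => iteratedFDeriv ℝ n f x fun _ => y :=
  (iteratedFDeriv ℝ n f x).cont.comp (continuous_pi fun _ => continuous_id)

open scoped Nat in
theorem sub_sum_iteratedFDeriv_isBigO [CompleteSpace F] {f : E → F} {x : E} {n : ℕ}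
    (hf : ContDiffAt ℝ (n + 1) f x) :
    (fun y => f (x + y) - ∑ k ∈ Finset.range (n + 1),
      (k ! : ℝ)⁻¹ • iteratedFDeriv ℝ k f x fun _ => y) =O[𝓝 0] fun y => ‖y‖ ^ (n + 1) := by
  obtain ⟨C, hC⟩ := (hf.continuousAt_iteratedFDeriv (k := n + 1) le_rfl).norm.isBoundedUnder_le
  have hnear : ∀ᶠ w in 𝓝 x, ContDiffAt ℝ (n + 1) f w ∧ ‖iteratedFDeriv ℝ (n + 1) f w‖ ≤ C :=
    (hf.eventually (by simp)).and (eventually_map.1 hC)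
  obtain ⟨ε, hε, hball⟩ := Metric.eventually_nhds_iff_ball.1 hnear
  refine IsBigO.of_bound ((n ! : ℝ)⁻¹ * C) ?_
  filter_upwards [Metric.ball_mem_nhds 0 hε] with y hy
  have hsegment : ∀ t ∈ Icc (0 : ℝ) 1, x + t • y ∈ Metric.ball x ε := fun t ht => by
    rw [mem_ball_zero_iff] at hy
    rw [mem_ball_iff_norm, add_sub_cancel_left, norm_smul, Real.norm_of_nonneg ht.1]
    nlinarith [ht.2, norm_nonneg y]
  have hbound : ∀ t ∈ uIoc (0 : ℝ) 1,
      ‖(1 - t) ^ n • iteratedFDeriv ℝ (n + 1) f (x + t • y) fun _ => y‖ ≤ C * ‖y‖ ^ (n + 1) := by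
    intro t ht
    rw [uIoc_of_le zero_le_one] at ht
    have hC_t := (hball _ (hsegment t (Ioc_subset_Icc_self ht))).2
    calc ‖(1 - t) ^ n • iteratedFDeriv ℝ (n + 1) f (x + t • y) fun _ => y‖
        ≤ 1 * (‖iteratedFDeriv ℝ (n + 1) f (x + t • y)‖ * ‖y‖ ^ (n + 1)) := by
          rw [norm_smul, norm_pow, Real.norm_of_nonneg (sub_nonneg.2 ht.2)]
          gcongr
          · exact pow_le_one₀ (sub_nonneg.2 ht.2) (by linarith [ht.1])
          · simpa using (iteratedFDeriv ℝ (n + 1) f (x + t • y)).le_opNorm fun _ => y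
      _ ≤ C * ‖y‖ ^ (n + 1) := by rw [one_mul]; gcongr
  rw [map_add_eq_sum_add_integral_iteratedFDeriv fun t ht => (hball _ (hsegment t ht)).1,
    add_sub_cancel_left, norm_smul, norm_inv, Real.norm_natCast, norm_pow, norm_norm, mul_assoc]
  gcongr
  simpa using intervalIntegral.norm_integral_le_of_norm_le_const hbound

end Taylor

section CircleAverage

variable {E : Type*} [NormedAddCommGroup E] [NormedSpace ℝ E]

open Real in
theorem norm_circleAverage_le_of_norm_le {f : ℂ → E} {c : ℂ} {r C : ℝ}
    (hf : ∀ z ∈ Metric.sphere c |r|, ‖f z‖ ≤ C) :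
    ‖circleAverage f c r‖ ≤ C := by
  have hint : ‖∫ θ in 0..2 * π, f (circleMap c r θ)‖ ≤ C * |2 * π - 0| :=
    intervalIntegral.norm_integral_le_of_norm_le_const fun θ _ => hf _ (circleMap_mem_sphere' c r θ)
  rw [sub_zero, abs_of_pos two_pi_pos] at hint
  rw [circleAverage_def, norm_smul, norm_inv, norm_of_nonneg two_pi_pos.le,
    inv_mul_le_iff₀ two_pi_pos]
  linarith

theorem circleAverage_zpow_of_ne_zero {n : ℤ} (hn : n ≠ 0) (r : ℝ) :
    Real.circleAverage (fun z : ℂ => z ^ n) 0 r = 0 := by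
  rcases eq_or_ne r 0 with rfl | hr
  · simp [zero_zpow n hn]
  have hcongr : (∮ z in C(0, r), (z - 0)⁻¹ • z ^ n) = ∮ z in C(0, r), (z - 0) ^ (n - 1) := by
    unfold circleIntegral
    congr with θ
    simp only [sub_zero]
    rw [zpow_sub_one₀ (circleMap_ne_center hr), smul_eq_mul (a := (circleMap 0 r θ)⁻¹),
      mul_comm (_ ^ n)]
  rw [Real.circleAverage_eq_circleIntegral hr, hcongr,
    circleIntegral.integral_sub_zpow_of_ne (by omega), smul_zero]

theorem circleAverage_eventuallyEq_zero_atTop {f : ℂ → E} (hf : HasCompactSupport f) :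
    Real.circleAverage f 0 =ᶠ[atTop] 0 := by
  obtain ⟨R, hR⟩ := hf.isCompact.isBounded.exists_norm_le
  filter_upwards [eventually_gt_atTop R, eventually_ge_atTop 0] with r hr hr0
  refine norm_le_zero_iff.1 (norm_circleAverage_le_of_norm_le fun z hz => ?_)
  rw [mem_sphere_zero_iff_norm, abs_of_nonneg hr0] at hz
  have hz_supp : z ∉ tsupport f := fun h => (hR z h).not_gt (hz ▸ hr)
  rw [image_eq_zero_of_notMem_tsupport hz_supp, norm_zero]

theorem circleIntegrable_zpow_mul {f : ℂ → ℂ} {r : ℝ} (hr : r ≠ 0)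
    (hf : ContinuousOn f (Metric.sphere 0 |r|)) (n : ℤ) :
    CircleIntegrable (fun z => z ^ n * f z) 0 r := by
  refine ContinuousOn.circleIntegrable' (.mul (continuousOn_id.zpow₀ n fun z hz => .inl ?_) hf)
  rintro rfl
  exact hr (abs_eq_zero.1 (by simpa using hz.symm))

end CircleAverage

section Wirtinger

/-- The conjugate Wirtinger operator `\bar∂ψ(w) = (1/2)(Dψ(w)(1) + i·Dψ(w)(i))`, the coefficient
of `\bar z` in `Dψ(w)(z)`. -/
noncomputable def wirtingerDerivBar (ψ : ℂ → ℂ) (w : ℂ) : ℂ :=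
  (1 / 2 : ℂ) * (fderiv ℝ ψ w 1 + Complex.I * fderiv ℝ ψ w Complex.I)

variable {ψ : ℂ → ℂ} {w : ℂ} {n : ℕ}

theorem fderiv_eq_wirtinger (ψ : ℂ → ℂ) (w z : ℂ) :
    fderiv ℝ ψ w z = z * wirtingerDeriv ψ w + starRingEnd ℂ z * wirtingerDerivBar ψ w := by
  have hcoord : fderiv ℝ ψ w z = z.re * fderiv ℝ ψ w 1 + z.im * fderiv ℝ ψ w Complex.I := by
    have hz : z = z.re • (1 : ℂ) + z.im • Complex.I := by simp [Complex.re_add_im]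
    rw [hz, map_add, map_smul, map_smul, ← hz, Complex.real_smul, Complex.real_smul]
  have hconj : starRingEnd ℂ z = z.re - z.im * Complex.I := by
    apply Complex.ext <;> simp
  rw [hcoord, hconj]
  conv_rhs => enter [1, 1]; rw [← Complex.re_add_im z]
  unfold wirtingerDeriv wirtingerDerivBar
  linear_combination ((z.im : ℂ) * fderiv ℝ ψ w Complex.I) * Complex.I_mul_I

theorem contDiffAt_wirtingerDeriv (hψ : ContDiffAt ℝ (n + 1) ψ w) :
    ContDiffAt ℝ n (wirtingerDeriv ψ) w := by
  have hfderiv : ContDiffAt ℝ n (fderiv ℝ ψ) w := hψ.fderiv_right le_rfl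
  exact contDiffAt_const.mul ((hfderiv.clm_apply contDiffAt_const).sub
    (contDiffAt_const.mul (hfderiv.clm_apply contDiffAt_const)))

theorem contDiffAt_wirtingerDerivBar (hψ : ContDiffAt ℝ (n + 1) ψ w) :
    ContDiffAt ℝ n (wirtingerDerivBar ψ) w := by
  have hfderiv : ContDiffAt ℝ n (fderiv ℝ ψ) w := hψ.fderiv_right le_rfl
  exact contDiffAt_const.mul ((hfderiv.clm_apply contDiffAt_const).add
    (contDiffAt_const.mul (hfderiv.clm_apply contDiffAt_const)))

theorem iteratedFDeriv_succ_apply_wirtinger (hψ : ContDiffAt ℝ (n + 1) ψ w) (z : ℂ) :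
    iteratedFDeriv ℝ (n + 1) ψ w (fun _ => z) =
      z * iteratedFDeriv ℝ n (wirtingerDeriv ψ) w (fun _ => z) +
        starRingEnd ℂ z * iteratedFDeriv ℝ n (wirtingerDerivBar ψ) w (fun _ => z) := by
  have hfderiv : ContDiffAt ℝ n (fderiv ℝ ψ) w := hψ.fderiv_right le_rfl
  have heval : (fun u => fderiv ℝ ψ u z) =
      fun u => z • wirtingerDeriv ψ u + starRingEnd ℂ z • wirtingerDerivBar ψ u :=
    funext fun u => fderiv_eq_wirtinger ψ u z
  have hcomm : iteratedFDeriv ℝ n (fderiv ℝ ψ) w (fun _ => z) z =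
      iteratedFDeriv ℝ n (fun u => fderiv ℝ ψ u z) w (fun _ => z) :=
    (congrArg (fun M => M fun _ => z)
      ((ContinuousLinearMap.apply ℝ ℂ z).iteratedFDeriv_comp_left hfderiv le_rfl)).symm
  have hd := contDiffAt_wirtingerDeriv hψ
  have hdbar := contDiffAt_wirtingerDerivBar hψ
  have hinit : Fin.init (fun _ : Fin (n + 1) => z) = fun _ => z := rfl
  rw [iteratedFDeriv_succ_apply_right, hinit, hcomm, heval,
    fun_iteratedFDeriv_add_apply (hd.const_smul z) (hdbar.const_smul _),
    iteratedFDeriv_const_smul_apply' hd, iteratedFDeriv_const_smul_apply' hdbar]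
  rfl

theorem circleIntegrable_zpow_mul_iteratedFDeriv {r : ℝ} (hr : r ≠ 0) (p : ℤ) (n : ℕ)
    (ψ : ℂ → ℂ) (w : ℂ) :
    CircleIntegrable (fun z => z ^ p * iteratedFDeriv ℝ n ψ w fun _ => z) 0 r :=
  circleIntegrable_zpow_mul hr (continuous_iteratedFDeriv_apply_diag n ψ w).continuousOn p

theorem circleAverage_zpow_mul_iteratedFDeriv_succ (hψ : ContDiffAt ℝ (n + 1) ψ w) {r : ℝ}
    (hr : r ≠ 0) (p : ℤ) :
    Real.circleAverage (fun z => z ^ p * iteratedFDeriv ℝ (n + 1) ψ w fun _ => z) 0 r =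
      Real.circleAverage
          (fun z => z ^ (p + 1) * iteratedFDeriv ℝ n (wirtingerDeriv ψ) w fun _ => z) 0 r +
        (r : ℂ) ^ 2 * Real.circleAverage
          (fun z => z ^ (p - 1) * iteratedFDeriv ℝ n (wirtingerDerivBar ψ) w fun _ => z) 0 r := by
  rw [← smul_eq_mul, ← Real.circleAverage_fun_smul, ← Real.circleAverage_fun_add
    (circleIntegrable_zpow_mul_iteratedFDeriv hr ..)
    (circleIntegrable_zpow_mul_iteratedFDeriv hr ..).const_fun_smul]
  refine Real.circleAverage_congr_sphere fun z hz => ?_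
  have hnorm : ‖z‖ = |r| := mem_sphere_zero_iff_norm.1 hz
  have hz0 : z ≠ 0 := norm_ne_zero_iff.1 (hnorm ▸ abs_ne_zero.2 hr)
  have hsq : (r : ℂ) ^ 2 = z * starRingEnd ℂ z := by
    rw [Complex.mul_conj, Complex.normSq_eq_norm_sq, hnorm, sq_abs, Complex.ofReal_pow]
  simp only [iteratedFDeriv_succ_apply_wirtinger hψ, hsq, zpow_add_one₀ hz0, zpow_sub_one₀ hz0,
    smul_eq_mul]
  field_simp

theorem circleAverage_zpow_mul_iteratedFDeriv {m : ℕ} (hnm : n ≤ m) (hψ : ContDiffAt ℝ n ψ w)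
    {r : ℝ} (hr : r ≠ 0) :
    Real.circleAverage (fun z => z ^ (-m : ℤ) * iteratedFDeriv ℝ n ψ w fun _ => z) 0 r =
      if n = m then (wirtingerDeriv^[n] ψ) w else 0 := by
  induction n generalizing m ψ with
  | zero =>
    simp only [iteratedFDeriv_zero_apply, mul_comm _ (ψ w), ← smul_eq_mul,
      Real.circleAverage_fun_smul]
    rcases eq_or_ne m 0 with rfl | hm
    · simp [Real.circleAverage_const]
    · rw [circleAverage_zpow_of_ne_zero (by omega), smul_zero, if_neg hm.symm]
  | succ n ih =>
    rw [circleAverage_zpow_mul_iteratedFDeriv_succ hψ hr]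
    have hlower : (-m : ℤ) + 1 = -(m - 1 : ℕ) := by omega
    have hraise : (-m : ℤ) - 1 = -(m + 1 : ℕ) := by omega
    rw [hlower, hraise, ih (by omega) (contDiffAt_wirtingerDeriv hψ),
      ih (by omega) (contDiffAt_wirtingerDerivBar hψ)]
    simp [show n ≠ m + 1 by omega, show n = m - 1 ↔ n + 1 = m by omega]

theorem circleAverage_zpow_mul_sum_iteratedFDeriv {m : ℕ} (hψ : ContDiffAt ℝ m ψ w) {r : ℝ}
    (hr : r ≠ 0) :
    Real.circleAverage (fun z => z ^ (-m : ℤ) * ∑ n ∈ Finset.range (m + 1),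
      (n.factorial : ℝ)⁻¹ • iteratedFDeriv ℝ n ψ w fun _ => z) 0 r =
      (m.factorial : ℂ)⁻¹ * (wirtingerDeriv^[m] ψ) w := by
  have hint : ∀ n ∈ Finset.range (m + 1), CircleIntegrable (fun z : ℂ =>
      (n.factorial : ℝ)⁻¹ • (z ^ (-m : ℤ) * iteratedFDeriv ℝ n ψ w fun _ => z)) 0 r :=
    fun n _ => (circleIntegrable_zpow_mul_iteratedFDeriv hr (-m) n ψ w).smul (n.factorial : ℝ)⁻¹
  have hterm : ∀ n ∈ Finset.range (m + 1), Real.circleAverage (fun z =>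
      (n.factorial : ℝ)⁻¹ • (z ^ (-m : ℤ) * iteratedFDeriv ℝ n ψ w fun _ => z)) 0 r =
      (n.factorial : ℝ)⁻¹ • if n = m then (wirtingerDeriv^[n] ψ) w else 0 := fun n hn => by
    have hle : n ≤ m := Finset.mem_range_succ_iff.1 hn
    rw [Real.circleAverage_fun_smul,
      circleAverage_zpow_mul_iteratedFDeriv hle (hψ.of_le (by exact_mod_cast hle)) hr]
  simp only [Finset.mul_sum, mul_smul_comm]
  rw [Real.circleAverage_fun_sum hint, Finset.sum_congr rfl hterm]
  simp

theorem circleAverage_zpow_mul_sub_isBigO {m : ℕ} (hψ : ContDiffAt ℝ (m + 1) ψ 0) :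
    (fun r => Real.circleAverage (fun z => z ^ (-m : ℤ) * ψ z) 0 r -
      (m.factorial : ℂ)⁻¹ * (wirtingerDeriv^[m] ψ) 0) =O[𝓝[≠] 0] fun r : ℝ => r := by
  set T : ℂ → ℂ := fun z => ∑ n ∈ Finset.range (m + 1),
    (n.factorial : ℝ)⁻¹ • iteratedFDeriv ℝ n ψ 0 fun _ => z
  have hT_cont : Continuous T := continuous_finsetSum _ fun n _ =>
    (continuous_iteratedFDeriv_apply_diag n ψ 0).fun_const_smul _
  obtain ⟨C, hC⟩ := (sub_sum_iteratedFDeriv_isBigO hψ).bound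
  have hnear : ∀ᶠ z in 𝓝 (0 : ℂ), ‖ψ z - T z‖ ≤ C * ‖z‖ ^ (m + 1) ∧ ContinuousAt ψ z := by
    filter_upwards [hC, hψ.eventually (by simp)] with z hz hz_smooth
    exact ⟨by simpa [T] using hz, hz_smooth.continuousAt⟩
  obtain ⟨ε, hε, hball⟩ := Metric.eventually_nhds_iff_ball.1 hnear
  refine IsBigO.of_bound C ?_
  filter_upwards [nhdsWithin_le_nhds (Metric.ball_mem_nhds 0 hε), self_mem_nhdsWithin]
    with r hrε hr
  have hsphere : ∀ z ∈ Metric.sphere (0 : ℂ) |r|, ‖z‖ = |r| ∧ z ∈ Metric.ball 0 ε := fun z hz => by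
    rw [mem_sphere_zero_iff_norm] at hz
    exact ⟨hz, by simpa [hz] using hrε⟩
  have hψ_cont : ContinuousOn ψ (Metric.sphere 0 |r|) := fun z hz =>
    (hball z (hsphere z hz).2).2.continuousWithinAt
  rw [← circleAverage_zpow_mul_sum_iteratedFDeriv (hψ.of_le (by simp)) hr,
    ← Real.circleAverage_fun_sub (circleIntegrable_zpow_mul hr hψ_cont _)
      (circleIntegrable_zpow_mul hr hT_cont.continuousOn _)]
  refine norm_circleAverage_le_of_norm_le fun z hz => ?_
  obtain ⟨hz_norm, hz_ball⟩ := hsphere z hz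
  rw [← mul_sub, norm_mul, norm_zpow, hz_norm, Real.norm_eq_abs, zpow_neg, zpow_natCast,
    inv_mul_le_iff₀ (pow_pos (abs_pos.2 hr) m)]
  calc ‖ψ z - T z‖ ≤ C * ‖z‖ ^ (m + 1) := (hball z hz_ball).1
    _ = |r| ^ m * (C * |r|) := by rw [hz_norm]; ring

end Wirtinger

section ResidueKernel

/-- The kernel `|z|^{2l} z^{-k} \bar z^{-1}` whose pairing with a test function, multiplied by `l`,
regularizes the residue current `\bar∂(1/z^k)`. Its value at `z = 0` is `0`. -/
noncomputable def residueKernel (k : ℕ) (l z : ℂ) : ℂ :=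
  ((‖z‖ ^ 2 : ℝ) : ℂ) ^ l * z ^ (-(k : ℤ)) * (starRingEnd ℂ z)⁻¹

variable {k m : ℕ} {l z : ℂ} {φ : ℂ → ℂ}

theorem measurable_residueKernel (k : ℕ) (l : ℂ) : Measurable (residueKernel k l) := by
  unfold residueKernel
  fun_prop

theorem residueKernel_eq_cpow_mul_zpow (hz : z ≠ 0) :
    residueKernel k l z = (‖z‖ : ℂ) ^ (2 * l - 2) * z ^ (1 - k : ℤ) := by
  have hnorm : (‖z‖ : ℂ) ≠ 0 := Complex.ofReal_ne_zero.2 (norm_ne_zero_iff.2 hz)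
  have hconj : (starRingEnd ℂ z)⁻¹ = z / (‖z‖ : ℂ) ^ 2 := by
    rw [← Complex.conj_mul', div_mul_cancel_right₀ hz]
  have hpow : ((‖z‖ ^ 2 : ℝ) : ℂ) ^ l = (‖z‖ : ℂ) ^ (2 * l) := by
    rw [sq, Complex.ofReal_mul, Complex.mul_cpow_ofReal_nonneg (norm_nonneg z) (norm_nonneg z),
      ← Complex.cpow_add _ _ hnorm, two_mul]
  rw [residueKernel, hconj, hpow, Complex.cpow_sub _ _ hnorm, Complex.cpow_ofNat, sub_eq_neg_add,
    zpow_add_one₀ hz]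
  ring

theorem norm_residueKernel (hz : z ≠ 0) :
    ‖residueKernel k l z‖ = ‖z‖ ^ (-(k + 1 - 2 * l.re)) := by
  have hpos : 0 < ‖z‖ := norm_pos_iff.2 hz
  have hre : (2 * l - 2).re = 2 * l.re - 2 := by simp
  rw [residueKernel_eq_cpow_mul_zpow hz, norm_mul, norm_zpow,
    Complex.norm_cpow_eq_rpow_re_of_pos hpos, hre, ← Real.rpow_intCast, ← Real.rpow_add hpos]
  congr 1
  push_cast
  ring

theorem locallyIntegrable_residueKernel (hl : ((k : ℝ) - 1) / 2 < l.re) :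
    LocallyIntegrable (residueKernel k l) := by
  refine locallyIntegrable_of_norm_le_rpow (C := 1) (α := k + 1 - 2 * l.re) ?_ ?_ ?_
    (measurable_residueKernel k l).aestronglyMeasurable
  · simp
  · rw [Complex.finrank_real_complex]
    push_cast
    linarith
  · filter_upwards [compl_mem_ae_iff.2 (measure_singleton (0 : ℂ))] with z hz
    rw [norm_residueKernel hz, one_mul]

theorem integrable_residueKernel_mul (hφ : Continuous φ) (hsupp : HasCompactSupport φ)
    (hl : ((k : ℝ) - 1) / 2 < l.re) : Integrable fun z => residueKernel k l z * φ z :=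
  (locallyIntegrable_residueKernel hl).integrable_smul_right_of_hasCompactSupport hφ hsupp

theorem circleAverage_residueKernel_mul {r : ℝ} (hr : 0 < r) :
    Real.circleAverage (fun z => residueKernel (m + 1) l z * φ z) 0 r =
      (r : ℂ) ^ (2 * l - 2) * Real.circleAverage (fun z => z ^ (-m : ℤ) * φ z) 0 r := by
  rw [← smul_eq_mul, ← Real.circleAverage_fun_smul]
  refine Real.circleAverage_congr_sphere fun z hz => ?_
  have hnorm : ‖z‖ = r := by rw [mem_sphere_zero_iff_norm.1 hz, abs_of_pos hr]
  have hexp : (1 - (m + 1 : ℕ) : ℤ) = -m := by push_cast; ring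
  simp only [residueKernel_eq_cpow_mul_zpow (norm_pos_iff.1 (hnorm ▸ hr)), hnorm, hexp,
    smul_eq_mul, mul_assoc]

theorem integral_residueKernel_mul_eq_mellin
    (hint : Integrable fun z => residueKernel (m + 1) l z * φ z) :
    ∫ z, residueKernel (m + 1) l z * φ z = 2 * Real.pi *
      mellin (fun r => Real.circleAverage (fun z => z ^ (-m : ℤ) * φ z) 0 r) (2 * l) := by
  rw [integral_eq_integral_smul_circleAverage hint, mellin, Complex.real_smul, Complex.ofReal_mul,
    Complex.ofReal_ofNat]
  congr 1
  refine setIntegral_congr_fun measurableSet_Ioi fun r hr => ?_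
  have hr0 : (r : ℂ) ≠ 0 := Complex.ofReal_ne_zero.2 (ne_of_gt hr)
  have hpow : (r : ℂ) ^ (2 * l - 1) = r * (r : ℂ) ^ (2 * l - 2) := by
    rw [show 2 * l - 1 = 1 + (2 * l - 2) by ring, Complex.cpow_add _ _ hr0, Complex.cpow_one]
  simp only [circleAverage_residueKernel_mul hr, hpow, Complex.real_smul, smul_eq_mul, mul_assoc]

theorem exists_differentiableOn_eq_mul_mellin_circleAverage (hφ : Continuous φ)
    (hsupp : HasCompactSupport φ) (hφ_zero : ContDiffAt ℝ (m + 1) φ 0) :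
    ∃ g : ℂ → ℂ, DifferentiableOn ℂ g {s | -1 < s.re} ∧
      (∀ s : ℂ, 0 < s.re → g s = s *
        mellin (fun r => Real.circleAverage (fun z => z ^ (-m : ℤ) * φ z) 0 r) s) ∧
      g 0 = (m.factorial : ℂ)⁻¹ * (wirtingerDeriv^[m] φ) 0 := by
  have hcont : ContinuousOn (fun z : ℂ => z ^ (-m : ℤ) * φ z) {z | ‖z - 0‖ ∈ Ioi (0 : ℝ)} := by
    refine (continuousOn_id.zpow₀ _ fun z hz => .inl ?_).mul hφ.continuousOn
    simpa using hz
  have htop := circleAverage_eventuallyEq_zero_atTop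
    (hsupp.mul_left (f := fun z : ℂ => z ^ (-m : ℤ)))
  refine exists_differentiableOn_eq_smul_mellin one_pos one_pos
    ((Real.ContinuousOn.circleAverage hcont fun r hr => le_of_lt hr).locallyIntegrableOn
      measurableSet_Ioi)
    (htop.trans_isBigO (isBigO_zero _ _)) ?_
  simpa only [Real.rpow_one] using
    (circleAverage_zpow_mul_sub_isBigO hφ_zero).mono (nhdsGT_le_nhdsNE 0)

end ResidueKernel

theorem stmt10_general (φ : ℂ → ℂ) (hφ : Continuous φ) (hsupp : HasCompactSupport φ)
    (k : ℕ) (hk : 1 ≤ k) (hφ_zero : ContDiffAt ℝ k φ 0) :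
    ∃ g : ℂ → ℂ,
      DifferentiableOn ℂ g {l : ℂ | -(1 / 2) < l.re} ∧
      (∀ l : ℂ, ((k : ℝ) - 1) / 2 < l.re →
        Integrable (fun z : ℂ =>
          ((‖z‖ ^ 2 : ℝ) : ℂ) ^ l * z ^ (-(k : ℤ)) * (starRingEnd ℂ z)⁻¹ * φ z) ∧
        g l = l * ∫ z : ℂ,
          ((‖z‖ ^ 2 : ℝ) : ℂ) ^ l * z ^ (-(k : ℤ)) * (starRingEnd ℂ z)⁻¹ * φ z) ∧
      g 0 = ((Real.pi : ℂ) / (Nat.factorial (k - 1) : ℂ)) *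
        (wirtingerDeriv^[k - 1] φ) 0 := by
  obtain ⟨m, rfl⟩ : ∃ m, k = m + 1 := ⟨k - 1, by omega⟩
  obtain ⟨g, hg_diff, hg_mellin, hg_zero⟩ :=
    exists_differentiableOn_eq_mul_mellin_circleAverage hφ hsupp (by exact_mod_cast hφ_zero)
  refine ⟨fun l => Real.pi * g (2 * l), ?_, fun l hl => ?_, ?_⟩
  · refine (hg_diff.comp (differentiableOn_id.const_mul 2) fun l hl => ?_).const_mul _
    have hre : -(1 / 2) < l.re := hl
    have hre_two : (2 * l).re = 2 * l.re := by simp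
    change -1 < (2 * l).re
    linarith
  · have hl_pos : 0 < l.re :=
      lt_of_le_of_lt (by push_cast; rw [add_sub_cancel_right]; positivity) hl
    have hint := integrable_residueKernel_mul hφ hsupp hl
    have hmellin := integral_residueKernel_mul_eq_mellin hint
    refine ⟨hint, ?_⟩
    simp only [residueKernel] at hmellin
    simp only [hmellin, hg_mellin (2 * l) (by simpa using hl_pos)]
    ring
  · simp only [mul_zero, hg_zero, Nat.add_sub_cancel, div_eq_mul_inv, mul_assoc]

open MeasureTheory in
/-- `λ ↦ λ ∫_ℂ |z|^{2λ} z^{-k} \bar z^{-1} φ(z) dA(z)` extends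
holomorphically to `{Re λ > -δ}` with value `(π/(k-1)!)·(∂^{k-1}φ)(0)` at `0`. -/
theorem stmt10 (φ : ℂ → ℂ) (hφ : ContDiff ℝ (⊤ : ℕ∞) φ) (hsupp : HasCompactSupport φ)
    (k : ℕ) (hk : 1 ≤ k) :
    ∃ δ > (0 : ℝ), ∃ g : ℂ → ℂ,
      DifferentiableOn ℂ g {l : ℂ | -δ < l.re} ∧
      (∀ l : ℂ, (k : ℝ) / 2 < l.re →
        Integrable (fun z : ℂ =>
          ((‖z‖ ^ 2 : ℝ) : ℂ) ^ l * z ^ (-(k : ℤ)) * (starRingEnd ℂ z)⁻¹ * φ z) ∧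
        g l = l * ∫ z : ℂ,
          ((‖z‖ ^ 2 : ℝ) : ℂ) ^ l * z ^ (-(k : ℤ)) * (starRingEnd ℂ z)⁻¹ * φ z) ∧
      g 0 = ((Real.pi : ℂ) / (Nat.factorial (k - 1) : ℂ)) *
        (wirtingerDeriv^[k - 1] φ) 0 := by
  obtain ⟨g, hg_diff, hg_eq, hg_zero⟩ :=
    stmt10_general φ hφ.continuous hsupp k hk (hφ.contDiffAt.of_le (by exact_mod_cast le_top))
  exact ⟨1 / 2, by norm_num, g, hg_diff, fun l hl => hg_eq l (by linarith), hg_zero⟩
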